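/- The set {x^n y^r g^m ζ^k u^i v^j : n, r, k, i, j ∈ ℕ, m ∈ ℤ} (where g^m denotes (g⁻¹)^{-m} when m < 0) is a basis of D as a k-vector space. -/

import Mathlib

open FreeAlgebra

/-- Generators of the double of the Jordan plane. -/
inductive JGen : Type
  | u | v | zeta | g | ginv | x | y

variable (k : Type) [Field k] [IsAlgClosed k] [CharZero k]

/-- The defining relations of the double of the Jordan plane. -/
inductive JRel : FreeAlgebra k JGen → FreeAlgebra k JGen → Prop
  | gginv : JRel (ι k .g * ι k .ginv) 1
  | ginvg : JRel (ι k .ginv * ι k .g) 1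
  | zg : JRel (ι k .zeta * ι k .g) (ι k .g * ι k .zeta)
  | gx : JRel (ι k .g * ι k .x) (ι k .x * ι k .g)
  | gy : JRel (ι k .g * ι k .y) (ι k .y * ι k .g + ι k .x * ι k .g)
  | zy : JRel (ι k .zeta * ι k .y) (ι k .y * ι k .zeta + ι k .y)
  | zx : JRel (ι k .zeta * ι k .x) (ι k .x * ι k .zeta + ι k .x)
  | ug : JRel (ι k .u * ι k .g) (ι k .g * ι k .u)
  | vg : JRel (ι k .v * ι k .g) (ι k .g * ι k .v + ι k .g * ι k .u)
  | vz : JRel (ι k .v * ι k .zeta) (ι k .zeta * ι k .v + ι k .v)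
  | uz : JRel (ι k .u * ι k .zeta) (ι k .zeta * ι k .u + ι k .u)
  | yx : JRel (ι k .y * ι k .x) (ι k .x * ι k .y - (1/2 : k) • (ι k .x * ι k .x))
  | vu : JRel (ι k .v * ι k .u) (ι k .u * ι k .v - (1/2 : k) • (ι k .u * ι k .u))
  | ux : JRel (ι k .u * ι k .x) (ι k .x * ι k .u)
  | vx : JRel (ι k .v * ι k .x) (ι k .x * ι k .v + (1 - ι k .g) + ι k .x * ι k .u)
  | uy : JRel (ι k .u * ι k .y) (ι k .y * ι k .u + (1 - ι k .g))
  | vy : JRel (ι k .v * ι k .y) (ι k .y * ι k .v - ι k .g * ι k .zeta + ι k .y * ι k .u)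

/-- The double of the Jordan plane, as the presented algebra. -/
def D : Type := RingQuot (JRel k)

noncomputable instance : Ring (D k) := inferInstanceAs (Ring (RingQuot (JRel k)))
noncomputable instance : Algebra k (D k) := inferInstanceAs (Algebra k (RingQuot (JRel k)))

/-- The canonical projection from the free algebra onto `D`. -/
noncomputable def Dmk : FreeAlgebra k JGen →ₐ[k] D k := RingQuot.mkAlgHom k (JRel k)

noncomputable def DU : D k := Dmk k (ι k .u)
noncomputable def DV : D k := Dmk k (ι k .v)
noncomputable def DZ : D k := Dmk k (ι k .zeta)
noncomputable def DG : D k := Dmk k (ι k .g)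
noncomputable def DGinv : D k := Dmk k (ι k .ginv)
noncomputable def DX : D k := Dmk k (ι k .x)
noncomputable def DY : D k := Dmk k (ι k .y)

set_option synthInstance.maxHeartbeats 1000000
set_option maxHeartbeats 2000000

/-- `g^m` for `m : ℤ`, meaning `(g⁻¹)^(-m)` when `m < 0`. -/
noncomputable def gPow (m : ℤ) : D k := if 0 ≤ m then (DG k) ^ m.toNat else (DGinv k) ^ (-m).toNat

/-- The PBW monomials `x^n y^r g^m ζ^k u^i v^j`. -/
noncomputable def pbwMonomial : ℕ × ℕ × ℤ × ℕ × ℕ × ℕ → D k :=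
  fun p => (DX k) ^ p.1 * (DY k) ^ p.2.1 * gPow k p.2.2.1 * (DZ k) ^ p.2.2.2.1 *
    (DU k) ^ p.2.2.2.2.1 * (DV k) ^ p.2.2.2.2.2

namespace PBW

/-! ### Relations in `D` -/

lemma rel {a b : FreeAlgebra k JGen} (h : JRel k a b) : Dmk k a = Dmk k b :=
  RingQuot.mkAlgHom_rel k h

lemma gginv : DG k * DGinv k = 1 := by simpa [DG, DGinv] using rel k .gginv
lemma ginvg : DGinv k * DG k = 1 := by simpa [DG, DGinv] using rel k .ginvg
lemma zg : DZ k * DG k = DG k * DZ k := by simpa [DG, DZ] using rel k .zg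
lemma gx : DG k * DX k = DX k * DG k := by simpa [DG, DX] using rel k .gx
lemma gy : DG k * DY k = DY k * DG k + DX k * DG k := by simpa [DG, DX, DY] using rel k .gy
lemma zy : DZ k * DY k = DY k * DZ k + DY k := by simpa [DZ, DY] using rel k .zy
lemma zx : DZ k * DX k = DX k * DZ k + DX k := by simpa [DZ, DX] using rel k .zx
lemma ug : DU k * DG k = DG k * DU k := by simpa [DU, DG] using rel k .ug
lemma vg : DV k * DG k = DG k * DV k + DG k * DU k := by simpa [DU, DG, DV] using rel k .vg
lemma vz : DV k * DZ k = DZ k * DV k + DV k := by simpa [DZ, DV] using rel k .vz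
lemma uz : DU k * DZ k = DZ k * DU k + DU k := by simpa [DZ, DU] using rel k .uz
lemma yx : DY k * DX k = DX k * DY k - (1/2 : k) • (DX k * DX k) := by
  simpa only [DX, DY, DG, DU, DV, DZ, map_mul, map_sub, map_smul] using rel k .yx
lemma vu : DV k * DU k = DU k * DV k - (1/2 : k) • (DU k * DU k) := by
  simpa only [DX, DY, DG, DU, DV, DZ, map_mul, map_sub, map_smul] using rel k .vu
lemma ux : DU k * DX k = DX k * DU k := by simpa [DU, DX] using rel k .ux
lemma vx : DV k * DX k = DX k * DV k + (1 - DG k) + DX k * DU k := by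
  simpa only [DX, DY, DG, DU, DV, DZ, map_mul, map_sub, map_add, map_one] using rel k .vx
lemma uy : DU k * DY k = DY k * DU k + (1 - DG k) := by
  simpa only [DX, DY, DG, DU, DV, DZ, map_mul, map_sub, map_add, map_one] using rel k .uy
lemma vy : DV k * DY k = DY k * DV k - DG k * DZ k + DY k * DU k := by
  simpa only [DX, DY, DG, DU, DV, DZ, map_mul, map_sub, map_add, map_one] using rel k .vy

/-- moving `g⁻¹` past an element -/
lemma ginv_comm {a b : D k} (h : DG k * a = b * DG k) : DGinv k * b = a * DGinv k := by
  calc DGinv k * b = DGinv k * (b * DG k) * DGinv k := by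
        rw [mul_assoc, mul_assoc b, gginv, mul_one]
    _ = a * DGinv k := by rw [← h, ← mul_assoc, ginvg, one_mul]

lemma ginvx : DGinv k * DX k = DX k * DGinv k := ginv_comm k (gx k)
lemma ginvz : DZ k * DGinv k = DGinv k * DZ k := (ginv_comm k (zg k).symm).symm
lemma ginvu : DU k * DGinv k = DGinv k * DU k := (ginv_comm k (ug k).symm).symm
lemma ginvy : DGinv k * DY k = DY k * DGinv k - DX k * DGinv k := by
  have h : DGinv k * (DY k + DX k) = DY k * DGinv k :=
    ginv_comm k (by rw [gy, add_mul])
  rw [mul_add, ginvx] at h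
  rw [← h]; abel
lemma ginvv : DV k * DGinv k = DGinv k * DV k - DGinv k * DU k := by
  have h : DGinv k * DV k = (DV k + DU k) * DGinv k :=
    ginv_comm k (by rw [mul_add, vg])
  rw [add_mul, ginvu] at h
  rw [h]; abel

lemma g_gPow (m : ℤ) : DG k * gPow k m = gPow k (m + 1) := by
  unfold gPow
  by_cases h : 0 ≤ m
  · have h1 : (0:ℤ) ≤ m + 1 := by omega
    have h2 : (m + 1).toNat = m.toNat + 1 := by omega
    rw [if_pos h, if_pos h1, h2, pow_succ']
  · have h2 : (-m).toNat = (-(m + 1)).toNat + 1 := by omega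
    rw [if_neg h, h2, pow_succ', ← mul_assoc, gginv, one_mul]
    by_cases h1 : 0 ≤ m + 1
    · have h3 : m = -1 := by omega
      subst h3; simp
    · rw [if_neg h1]

lemma ginv_gPow (m : ℤ) : DGinv k * gPow k m = gPow k (m - 1) := by
  have := g_gPow k (m - 1)
  rw [sub_add_cancel] at this
  rw [← this, ← mul_assoc, ginvg, one_mul]

/-! ### Spanning -/

/-- the span of the monomials -/
noncomputable def S : Submodule k (D k) := Submodule.span k (Set.range (pbwMonomial k))

/-- left-assembled monomials -/
lemma pbw_eq (n r : ℕ) (m : ℤ) (l i j : ℕ) : pbwMonomial k (n, r, m, l, i, j) =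
    DX k ^ n * (DY k ^ r * (gPow k m * (DZ k ^ l * (DU k ^ i * DV k ^ j)))) := by
  simp only [pbwMonomial, mul_assoc]

lemma mem_S (n r : ℕ) (m : ℤ) (l i j : ℕ) :
    DX k ^ n * (DY k ^ r * (gPow k m * (DZ k ^ l * (DU k ^ i * DV k ^ j)))) ∈ S k := by
  rw [← pbw_eq]; exact Submodule.subset_span ⟨_, rfl⟩

lemma pow_mem {T : Submodule k (D k)} {a : D k} (h : ∀ t ∈ T, a * t ∈ T) (n : ℕ) :
    ∀ t ∈ T, a ^ n * t ∈ T := by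
  induction n with
  | zero => intro t ht; simpa using ht
  | succ n ih => intro t ht; rw [pow_succ', mul_assoc]; exact h _ (ih t ht)

/-- `T a` : elements `t` of `S` with `a * t ∈ S`. -/
noncomputable def T (a : D k) : Submodule k (D k) := S k ⊓ (S k).comap (LinearMap.mulLeft k a)

lemma mem_T {a t : D k} : t ∈ T k a ↔ t ∈ S k ∧ a * t ∈ S k := by
  simp [T]

lemma closed_of_le {a : D k} (h : S k ≤ T k a) : ∀ t ∈ S k, a * t ∈ S k :=
  fun t ht => ((mem_T k).1 (h ht)).2

lemma stage1 {T : Submodule k (D k)} (hX : ∀ t ∈ T, DX k * t ∈ T)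
    (h : ∀ r m l i j, DY k ^ r * (gPow k m * (DZ k ^ l * (DU k ^ i * DV k ^ j))) ∈ T) :
    S k ≤ T := by
  refine Submodule.span_le.2 ?_
  rintro _ ⟨⟨n, r, m, l, i, j⟩, rfl⟩
  rw [pbw_eq]
  exact pow_mem k hX _ _ (h _ _ _ _ _)

lemma stage2 {T : Submodule k (D k)} (hX : ∀ t ∈ T, DX k * t ∈ T) (hY : ∀ t ∈ T, DY k * t ∈ T)
    (h : ∀ m l i j, gPow k m * (DZ k ^ l * (DU k ^ i * DV k ^ j)) ∈ T) :
    S k ≤ T := stage1 k hX fun _ _ _ _ _ => pow_mem k hY _ _ (h _ _ _ _)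

lemma stage3 {T : Submodule k (D k)} (hX : ∀ t ∈ T, DX k * t ∈ T) (hY : ∀ t ∈ T, DY k * t ∈ T)
    (hG : ∀ t ∈ T, DG k * t ∈ T) (hGi : ∀ t ∈ T, DGinv k * t ∈ T)
    (h : ∀ l i j, DZ k ^ l * (DU k ^ i * DV k ^ j) ∈ T) :
    S k ≤ T := stage2 k hX hY fun m l i j => by
  unfold gPow
  split_ifs
  · exact pow_mem k hG _ _ (h _ _ _)
  · exact pow_mem k hGi _ _ (h _ _ _)

lemma stage4 {T : Submodule k (D k)} (hX : ∀ t ∈ T, DX k * t ∈ T) (hY : ∀ t ∈ T, DY k * t ∈ T)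
    (hG : ∀ t ∈ T, DG k * t ∈ T) (hGi : ∀ t ∈ T, DGinv k * t ∈ T) (hZ : ∀ t ∈ T, DZ k * t ∈ T)
    (h : ∀ i j, DU k ^ i * DV k ^ j ∈ T) :
    S k ≤ T := stage3 k hX hY hG hGi fun _ _ _ => pow_mem k hZ _ _ (h _ _)

lemma stage5 {T : Submodule k (D k)} (hX : ∀ t ∈ T, DX k * t ∈ T) (hY : ∀ t ∈ T, DY k * t ∈ T)
    (hG : ∀ t ∈ T, DG k * t ∈ T) (hGi : ∀ t ∈ T, DGinv k * t ∈ T) (hZ : ∀ t ∈ T, DZ k * t ∈ T)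
    (hU : ∀ t ∈ T, DU k * t ∈ T) (h : ∀ j, DV k ^ j ∈ T) :
    S k ≤ T := stage4 k hX hY hG hGi hZ fun _ _ => pow_mem k hU _ _ (h _)

lemma gPow_zero : gPow k 0 = 1 := by simp [gPow]

lemma SX : ∀ t ∈ S k, DX k * t ∈ S k := by
  refine closed_of_le k (Submodule.span_le.2 ?_)
  rintro _ ⟨⟨n, r, m, l, i, j⟩, rfl⟩
  rw [pbw_eq]
  refine (mem_T k).2 ⟨mem_S k _ _ _ _ _ _, ?_⟩
  rw [← mul_assoc, ← pow_succ']
  exact mem_S k _ _ _ _ _ _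

lemma TX {a : D k} (h : ∀ t ∈ T k a, a * (DX k * t) ∈ S k) : ∀ t ∈ T k a, DX k * t ∈ T k a :=
  fun t ht => (mem_T k).2 ⟨SX k t ((mem_T k).1 ht).1, h t ht⟩

lemma SY : ∀ t ∈ S k, DY k * t ∈ S k := by
  refine closed_of_le k (stage1 k (TX k fun t ht => ?_) fun r m l i j => ?_)
  · obtain ⟨h1, h2⟩ := (mem_T k).1 ht
    rw [← mul_assoc, yx, sub_mul, smul_mul_assoc, mul_assoc, mul_assoc]
    exact sub_mem (SX k _ h2) ((S k).smul_mem _ (SX k _ (SX k _ h1)))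
  · refine (mem_T k).2 ⟨by simpa using mem_S k 0 r m l i j, ?_⟩
    rw [← mul_assoc, ← pow_succ']
    simpa using mem_S k 0 (r + 1) m l i j

lemma TY {a : D k} (h : ∀ t ∈ T k a, a * (DY k * t) ∈ S k) : ∀ t ∈ T k a, DY k * t ∈ T k a :=
  fun t ht => (mem_T k).2 ⟨SY k t ((mem_T k).1 ht).1, h t ht⟩

lemma SG : ∀ t ∈ S k, DG k * t ∈ S k := by
  refine closed_of_le k (stage2 k (TX k fun t ht => ?_) (TY k fun t ht => ?_) fun m l i j => ?_)
  · obtain ⟨h1, h2⟩ := (mem_T k).1 ht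
    rw [← mul_assoc, gx, mul_assoc]
    exact SX k _ h2
  · obtain ⟨h1, h2⟩ := (mem_T k).1 ht
    rw [← mul_assoc, gy, add_mul, mul_assoc, mul_assoc]
    exact add_mem (SY k _ h2) (SX k _ h2)
  · refine (mem_T k).2 ⟨by simpa using mem_S k 0 0 m l i j, ?_⟩
    rw [← mul_assoc, g_gPow]
    simpa using mem_S k 0 0 (m + 1) l i j

lemma SGi : ∀ t ∈ S k, DGinv k * t ∈ S k := by
  refine closed_of_le k (stage2 k (TX k fun t ht => ?_) (TY k fun t ht => ?_) fun m l i j => ?_)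
  · obtain ⟨h1, h2⟩ := (mem_T k).1 ht
    rw [← mul_assoc, ginvx, mul_assoc]
    exact SX k _ h2
  · obtain ⟨h1, h2⟩ := (mem_T k).1 ht
    rw [← mul_assoc, ginvy, sub_mul, mul_assoc, mul_assoc]
    exact sub_mem (SY k _ h2) (SX k _ h2)
  · refine (mem_T k).2 ⟨by simpa using mem_S k 0 0 m l i j, ?_⟩
    rw [← mul_assoc, ginv_gPow]
    simpa using mem_S k 0 0 (m - 1) l i j

lemma TG {a : D k} (h : ∀ t ∈ T k a, a * (DG k * t) ∈ S k) : ∀ t ∈ T k a, DG k * t ∈ T k a :=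
  fun t ht => (mem_T k).2 ⟨SG k t ((mem_T k).1 ht).1, h t ht⟩

lemma TGi {a : D k} (h : ∀ t ∈ T k a, a * (DGinv k * t) ∈ S k) :
    ∀ t ∈ T k a, DGinv k * t ∈ T k a :=
  fun t ht => (mem_T k).2 ⟨SGi k t ((mem_T k).1 ht).1, h t ht⟩

lemma SZ : ∀ t ∈ S k, DZ k * t ∈ S k := by
  refine closed_of_le k (stage3 k (TX k fun t ht => ?_) (TY k fun t ht => ?_)
    (TG k fun t ht => ?_) (TGi k fun t ht => ?_) fun l i j => ?_)
  · obtain ⟨h1, h2⟩ := (mem_T k).1 ht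
    rw [← mul_assoc, zx, add_mul, mul_assoc]
    exact add_mem (SX k _ h2) (SX k _ h1)
  · obtain ⟨h1, h2⟩ := (mem_T k).1 ht
    rw [← mul_assoc, zy, add_mul, mul_assoc]
    exact add_mem (SY k _ h2) (SY k _ h1)
  · obtain ⟨h1, h2⟩ := (mem_T k).1 ht
    rw [← mul_assoc, zg, mul_assoc]
    exact SG k _ h2
  · obtain ⟨h1, h2⟩ := (mem_T k).1 ht
    rw [← mul_assoc, ginvz, mul_assoc]
    exact SGi k _ h2
  · refine (mem_T k).2 ⟨by simpa [gPow_zero] using mem_S k 0 0 0 l i j, ?_⟩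
    rw [← mul_assoc, ← pow_succ']
    simpa [gPow_zero] using mem_S k 0 0 0 (l + 1) i j

lemma TZ {a : D k} (h : ∀ t ∈ T k a, a * (DZ k * t) ∈ S k) : ∀ t ∈ T k a, DZ k * t ∈ T k a :=
  fun t ht => (mem_T k).2 ⟨SZ k t ((mem_T k).1 ht).1, h t ht⟩

lemma SU : ∀ t ∈ S k, DU k * t ∈ S k := by
  refine closed_of_le k (stage4 k (TX k fun t ht => ?_) (TY k fun t ht => ?_)
    (TG k fun t ht => ?_) (TGi k fun t ht => ?_) (TZ k fun t ht => ?_) fun i j => ?_)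
  · obtain ⟨h1, h2⟩ := (mem_T k).1 ht
    rw [← mul_assoc, ux, mul_assoc]
    exact SX k _ h2
  · obtain ⟨h1, h2⟩ := (mem_T k).1 ht
    rw [← mul_assoc, uy, add_mul, mul_assoc, sub_mul, one_mul]
    exact add_mem (SY k _ h2) (sub_mem h1 (SG k _ h1))
  · obtain ⟨h1, h2⟩ := (mem_T k).1 ht
    rw [← mul_assoc, ug, mul_assoc]
    exact SG k _ h2
  · obtain ⟨h1, h2⟩ := (mem_T k).1 ht
    rw [← mul_assoc, ginvu, mul_assoc]
    exact SGi k _ h2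
  · obtain ⟨h1, h2⟩ := (mem_T k).1 ht
    rw [← mul_assoc, uz, add_mul, mul_assoc]
    exact add_mem (SZ k _ h2) h2
  · refine (mem_T k).2 ⟨by simpa [gPow_zero] using mem_S k 0 0 0 0 i j, ?_⟩
    rw [← mul_assoc, ← pow_succ']
    simpa [gPow_zero] using mem_S k 0 0 0 0 (i + 1) j

lemma TU {a : D k} (h : ∀ t ∈ T k a, a * (DU k * t) ∈ S k) : ∀ t ∈ T k a, DU k * t ∈ T k a :=
  fun t ht => (mem_T k).2 ⟨SU k t ((mem_T k).1 ht).1, h t ht⟩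

lemma SV : ∀ t ∈ S k, DV k * t ∈ S k := by
  refine closed_of_le k (stage5 k (TX k fun t ht => ?_) (TY k fun t ht => ?_)
    (TG k fun t ht => ?_) (TGi k fun t ht => ?_) (TZ k fun t ht => ?_) (TU k fun t ht => ?_)
    fun j => ?_)
  · obtain ⟨h1, h2⟩ := (mem_T k).1 ht
    rw [← mul_assoc, vx, add_mul, add_mul, mul_assoc, mul_assoc, sub_mul, one_mul]
    exact add_mem (add_mem (SX k _ h2) (sub_mem h1 (SG k _ h1))) (SX k _ (SU k _ h1))
  · obtain ⟨h1, h2⟩ := (mem_T k).1 ht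
    rw [← mul_assoc, vy, add_mul, sub_mul, mul_assoc, mul_assoc, mul_assoc]
    exact add_mem (sub_mem (SY k _ h2) (SG k _ (SZ k _ h1))) (SY k _ (SU k _ h1))
  · obtain ⟨h1, h2⟩ := (mem_T k).1 ht
    rw [← mul_assoc, vg, add_mul, mul_assoc, mul_assoc]
    exact add_mem (SG k _ h2) (SG k _ (SU k _ h1))
  · obtain ⟨h1, h2⟩ := (mem_T k).1 ht
    rw [← mul_assoc, ginvv, sub_mul, mul_assoc, mul_assoc]
    exact sub_mem (SGi k _ h2) (SGi k _ (SU k _ h1))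
  · obtain ⟨h1, h2⟩ := (mem_T k).1 ht
    rw [← mul_assoc, vz, add_mul, mul_assoc]
    exact add_mem (SZ k _ h2) h2
  · obtain ⟨h1, h2⟩ := (mem_T k).1 ht
    rw [← mul_assoc, vu, sub_mul, smul_mul_assoc, mul_assoc, mul_assoc]
    exact sub_mem (SU k _ h2) ((S k).smul_mem _ (SU k _ (SU k _ h1)))
  · refine (mem_T k).2 ⟨by simpa [gPow_zero] using mem_S k 0 0 0 0 0 j, ?_⟩
    rw [← pow_succ']
    simpa [gPow_zero] using mem_S k 0 0 0 0 0 (j + 1)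

lemma S_mul (a : FreeAlgebra k JGen) : ∀ t ∈ S k, Dmk k a * t ∈ S k := by
  induction a using FreeAlgebra.induction with
  | grade0 r =>
    intro t ht
    rw [AlgHom.commutes, ← Algebra.smul_def]
    exact (S k).smul_mem _ ht
  | grade1 x =>
    cases x
    · exact SU k
    · exact SV k
    · exact SZ k
    · exact SG k
    · exact SGi k
    · exact SX k
    · exact SY k
  | mul a b ha hb =>
    intro t ht
    rw [map_mul, mul_assoc]
    exact ha _ (hb _ ht)
  | add a b ha hb =>
    intro t ht
    rw [map_add, add_mul]
    exact add_mem (ha _ ht) (hb _ ht)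

lemma span_top : Submodule.span k (Set.range (pbwMonomial k)) = ⊤ := by
  rw [eq_top_iff]
  intro d _
  obtain ⟨a, rfl⟩ : ∃ a, Dmk k a = d := RingQuot.mkAlgHom_surjective k (JRel k) d
  have h1 : (1 : D k) ∈ S k := by simpa [gPow_zero] using mem_S k 0 0 0 0 0 0
  simpa [S] using S_mul k a 1 h1

/-! ### A representation on functions on `ℤ^5` -/

/-- the representation space -/
abbrev M : Type := ℤ → ℤ → ℤ → ℤ → ℤ → k

/-- action of `x` -/
def oX : M k →ₗ[k] M k where
  toFun f := fun n i m r j => f (n-1) i m r j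
  map_add' _ _ := rfl
  map_smul' _ _ := rfl

/-- action of `u` -/
def oU : M k →ₗ[k] M k where
  toFun f := fun n i m r j => f n (i-1) m r j
  map_add' _ _ := rfl
  map_smul' _ _ := rfl

/-- action of `g` -/
def oG : M k →ₗ[k] M k where
  toFun f := fun n i m r j => f n i (m-1) r j
  map_add' _ _ := rfl
  map_smul' _ _ := rfl

/-- action of the inverse of `g` -/
def oGi : M k →ₗ[k] M k where
  toFun f := fun n i m r j => f n i (m+1) r j
  map_add' _ _ := rfl
  map_smul' _ _ := rfl

/-- action of `ζ` -/
def oZ (c : k) : M k →ₗ[k] M k where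
  toFun f := fun n i m r j => ((n:k) - i + r - j + c) * f n i m r j
  map_add' _ _ := by ext; simp; ring
  map_smul' _ _ := by ext; simp; ring

/-- action of `y` -/
noncomputable def oY : M k →ₗ[k] M k where
  toFun f := fun n i m r j => (-((n:k)-1)/2 - m - 1) * f (n-1) i m r j
    + ((i:k)+1) * f n (i+1) (m-1) r j - ((i:k)+1) * f n (i+1) m r j + f n i (m-1) (r-1) j
  map_add' _ _ := by ext; simp; ring
  map_smul' _ _ := by ext; simp; ring

/-- action of `v` -/
noncomputable def oV (c : k) : M k →ₗ[k] M k where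
  toFun f := fun n i m r j => ((n:k)+1) * f (n+1) i m r j - ((n:k)+1) * f (n+1) i (m-1) r j
    + ((n:k) - ((i:k)-1)/2 + m) * f n (i-1) m r j + f n i m r (j-1)
    - ((r:k)+1) * (c + (r:k)/2 - j) * f n i m (r+1) j
  map_add' _ _ := by ext; simp; ring
  map_smul' _ _ := by ext; simp; ring

/-- generators to operators -/
noncomputable def oGen (c : k) : JGen → Module.End k (M k)
  | .u => oU k
  | .v => oV k c
  | .zeta => oZ k c
  | .g => oG k
  | .ginv => oGi k
  | .x => oX k
  | .y => oY k

lemma oRel (c : k) {a b : FreeAlgebra k JGen} (h : JRel k a b) :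
    FreeAlgebra.lift k (oGen k c) a = FreeAlgebra.lift k (oGen k c) b := by
  cases h <;>
  · simp only [map_mul, map_add, map_sub, map_smul, map_one, FreeAlgebra.lift_ι_apply, oGen]
    ext f n i m r j
    simp [oU, oV, oZ, oG, oGi, oX, oY]
    try ring_nf

/-- the representation -/
noncomputable def rep (c : k) : D k →ₐ[k] Module.End k (M k) :=
  RingQuot.liftAlgHom k ⟨FreeAlgebra.lift k (oGen k c), fun _ _ h => oRel k c h⟩

lemma rep_gen (c : k) (s : JGen) : rep k c (Dmk k (ι k s)) = oGen k c s := by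
  have := RingQuot.liftAlgHom_mkAlgHom_apply k (FreeAlgebra.lift k (oGen k c))
    (fun _ _ h => oRel k c h) (ι k s)
  rw [FreeAlgebra.lift_ι_apply] at this
  exact this

/-- delta functions -/
def del (n i m r j : ℤ) : M k := fun n' i' m' r' j' =>
  if n' = n ∧ i' = i ∧ m' = m ∧ r' = r ∧ j' = j then 1 else 0

lemma oU_del (n i m r j : ℤ) : oU k (del k n i m r j) = del k n (i+1) m r j := by
  ext a b c d e; simp [oU, del, sub_eq_iff_eq_add]

lemma oG_del (n i m r j : ℤ) : oG k (del k n i m r j) = del k n i (m+1) r j := by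
  ext a b c d e; simp [oG, del, sub_eq_iff_eq_add]

lemma oGi_del (n i m r j : ℤ) : oGi k (del k n i m r j) = del k n i (m-1) r j := by
  ext a b c d e; simp [oGi, del, eq_sub_iff_add_eq]

lemma oZ_del (c : k) (n i m r j : ℤ) :
    oZ k c (del k n i m r j) = ((n:k) - i + r - j + c) • del k n i m r j := by
  ext a b c d e
  simp only [oZ, del, LinearMap.coe_mk, AddHom.coe_mk, Pi.smul_apply, smul_eq_mul]
  split_ifs with h
  · obtain ⟨rfl, rfl, rfl, rfl, rfl⟩ := h; rfl
  · simp

lemma oV_del (c : k) (j : ℤ) :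
    oV k c (del k 0 0 0 0 j) = del k 0 0 0 0 (j+1) := by
  ext n i m r e
  have h1 : ∀ (p : Prop) [Decidable p], ((n:k)+1) * (if n + 1 = 0 ∧ p then 1 else 0) = 0 := by
    intro p _
    split_ifs with h
    · have : ((n + 1 : ℤ) : k) = 0 := by rw [h.1]; simp
      push_cast at this; simp [this]
    · simp
  have h2 : ((r:k)+1) * (c + (r:k)/2 - e) *
      (if n = 0 ∧ i = 0 ∧ m = 0 ∧ r + 1 = 0 ∧ e = j then 1 else 0) = 0 := by
    split_ifs with h
    · have : ((r + 1 : ℤ) : k) = 0 := by rw [h.2.2.2.1]; simp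
      push_cast at this; simp [this]
    · simp
  have h3 : ((n:k) - ((i:k)-1)/2 + m) *
      (if n = 0 ∧ i - 1 = 0 ∧ m = 0 ∧ r = 0 ∧ e = j then 1 else 0) = 0 := by
    split_ifs with h
    · obtain ⟨ha, hb, hc, -⟩ := h
      have : i = 1 := by omega
      subst this; simp [ha, hc]
    · simp
  simp only [oV, del, LinearMap.coe_mk, AddHom.coe_mk]
  rw [h1, h1, h2, h3]
  simp [sub_eq_iff_eq_add]

/-- `f` has leading term `a * del` at `r`-degree `N` -/
def Lead (n0 i0 m0 N j0 : ℤ) (a : k) (f : M k) : Prop :=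
  ∀ n i m r j, N ≤ r → f n i m r j = a * del k n0 i0 m0 N j0 n i m r j

lemma lead_oX {n0 i0 m0 N j0 : ℤ} {a : k} {f : M k} (h : Lead k n0 i0 m0 N j0 a f) :
    Lead k (n0+1) i0 m0 N j0 a (oX k f) := by
  intro n i m r j hr
  have := h (n-1) i m r j hr
  simpa [oX, del, sub_eq_iff_eq_add] using this

lemma lead_oY {n0 i0 m0 N j0 : ℤ} {a : k} {f : M k} (h : Lead k n0 i0 m0 N j0 a f) :
    Lead k n0 i0 (m0+1) (N+1) j0 a (oY k f) := by
  intro n i m r j hr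
  have hz : ∀ n i m j, f n i m r j = 0 := by
    intro n i m j
    rw [h n i m r j (by omega), del, if_neg (by omega), mul_zero]
  have := h n i (m-1) (r-1) j (by omega)
  simp only [oY, LinearMap.coe_mk, AddHom.coe_mk, hz, this]
  simp [del, sub_eq_iff_eq_add]

lemma lead_X {n0 i0 m0 N j0 : ℤ} {a : k} {f : M k} (h : Lead k n0 i0 m0 N j0 a f) (s : ℕ) :
    Lead k (n0+s) i0 m0 N j0 a ((oX k ^ s) f) := by
  induction s with
  | zero => simpa using h
  | succ s ih =>
    rw [pow_succ', Module.End.mul_apply]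
    have := lead_oX k ih
    push_cast; rwa [← add_assoc]

lemma lead_Y {n0 i0 m0 N j0 : ℤ} {a : k} {f : M k} (h : Lead k n0 i0 m0 N j0 a f) (s : ℕ) :
    Lead k n0 i0 (m0+s) (N+s) j0 a ((oY k ^ s) f) := by
  induction s with
  | zero => simpa using h
  | succ s ih =>
    rw [pow_succ', Module.End.mul_apply]
    have := lead_oY k ih
    push_cast; rwa [← add_assoc, ← add_assoc]

lemma V_pow (c : k) (s : ℕ) : (oV k c ^ s) (del k 0 0 0 0 0) = del k 0 0 0 0 s := by
  induction s with
  | zero => simp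
  | succ s ih => rw [pow_succ', Module.End.mul_apply, ih, oV_del]; simp

lemma U_pow (s : ℕ) (j : ℤ) : (oU k ^ s) (del k 0 0 0 0 j) = del k 0 s 0 0 j := by
  induction s with
  | zero => simp
  | succ s ih => rw [pow_succ', Module.End.mul_apply, ih, oU_del]; simp

lemma G_pow (s : ℕ) (i j : ℤ) : (oG k ^ s) (del k 0 i 0 0 j) = del k 0 i s 0 j := by
  induction s with
  | zero => simp
  | succ s ih => rw [pow_succ', Module.End.mul_apply, ih, oG_del]; simp

lemma Gi_pow (s : ℕ) (i j : ℤ) : (oGi k ^ s) (del k 0 i 0 0 j) = del k 0 i (-s) 0 j := by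
  induction s with
  | zero => simp
  | succ s ih =>
    rw [pow_succ', Module.End.mul_apply, ih, oGi_del]
    congr 1; push_cast; ring

lemma Z_pow (c : k) (s : ℕ) (i j : ℤ) :
    (oZ k c ^ s) (del k 0 i 0 0 j) = (c - i - j) ^ s • del k 0 i 0 0 j := by
  induction s with
  | zero => simp
  | succ s ih =>
    rw [pow_succ', Module.End.mul_apply, ih, map_smul, oZ_del, smul_smul, pow_succ]
    congr 2; simp; ring

lemma rep_gPow (c : k) (m i j : ℤ) : rep k c (gPow k m) (del k 0 i 0 0 j) = del k 0 i m 0 j := by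
  unfold gPow
  split_ifs with h
  · rw [map_pow, DG, rep_gen, oGen, G_pow, Int.toNat_of_nonneg h]
  · rw [map_pow, DGinv, rep_gen, oGen, Gi_pow, Int.toNat_of_nonneg (by omega), neg_neg]

lemma rep_pbw (c : k) (n r : ℕ) (m : ℤ) (l i j : ℕ) :
    Lead k n i (m + r) r j ((c - i - j) ^ l)
      (rep k c (pbwMonomial k (n, r, m, l, i, j)) (del k 0 0 0 0 0)) := by
  rw [pbw_eq]
  simp only [map_mul, Module.End.mul_apply]
  simp only [map_pow, DX, DY, DZ, DU, DV, rep_gen, oGen]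
  rw [V_pow, U_pow, Z_pow, map_smul, rep_gPow]
  have h0 : Lead k 0 i m 0 j ((c - i - j) ^ l)
      ((c - ((i:ℤ):k) - ((j:ℤ):k)) ^ l • del k 0 i m 0 j) := by
    intro _ _ _ _ _ _; simp
  have := lead_X k (lead_Y k h0 r) n
  simpa using this

lemma lin_indep : LinearIndependent k (pbwMonomial k) := by
  rw [linearIndependent_iff]
  intro a ha
  by_contra hne
  obtain ⟨p, hp, hmax⟩ := a.support.exists_max_image (fun p => p.2.1)
    (Finsupp.support_nonempty_iff.2 hne)
  obtain ⟨n, r, m, l, i, j⟩ := p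
  let P : Polynomial k := ∑ q ∈ a.support,
    if q.1 = n ∧ q.2.1 = r ∧ q.2.2.1 = m ∧ q.2.2.2.2.1 = i ∧ q.2.2.2.2.2 = j
    then Polynomial.monomial q.2.2.2.1 (a q) else 0
  have hP : P = 0 := by
    refine Polynomial.funext fun t => ?_
    have h1 := congrArg (fun d => rep k (t + i + j) d (del k 0 0 0 0 0) n i (m + r) r j) ha
    simp only [Finsupp.linearCombination_apply, Finsupp.sum, map_sum, map_smul, map_zero,
      LinearMap.sum_apply, LinearMap.smul_apply, Finset.sum_apply, Pi.smul_apply,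
      LinearMap.zero_apply, Pi.zero_apply] at h1
    rw [Polynomial.eval_zero, ← h1, Polynomial.eval_finset_sum]
    refine Finset.sum_congr rfl fun q hq => ?_
    have hle := hmax q hq
    obtain ⟨n', r', m', l', i', j'⟩ := q
    rw [rep_pbw k (t + i + j) n' r' m' l' i' j' n i (m + r) r j (by exact_mod_cast hle)]
    simp only [del]
    by_cases hc : n' = n ∧ r' = r ∧ m' = m ∧ i' = i ∧ j' = j
    · obtain ⟨rfl, rfl, rfl, rfl, rfl⟩ := hc
      have e : t + (i':k) + j' - i' - j' = t := by ring
      simp [e]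
    · rw [if_neg hc, if_neg (by omega)]
      simp
  have h2 : P.coeff l = a (n, r, m, l, i, j) := by
    simp only [P, Polynomial.finset_sum_coeff]
    rw [Finset.sum_eq_single (n, r, m, l, i, j)]
    · simp
    · rintro ⟨n', r', m', l', i', j'⟩ _ hq
      split_ifs with hc
      · obtain ⟨h1, h2, h3, h4, h5⟩ := hc
        rw [Polynomial.coeff_monomial, if_neg]
        rintro h6
        apply hq
        simp_all
      · simp
    · intro h; exact absurd hp h
  rw [hP] at h2
  exact (Finsupp.mem_support_iff.1 hp) (by simpa using h2.symm)

end PBW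

/-- the PBW monomials form a `k`-basis of `D`. -/
theorem pbw_basis :
    LinearIndependent k (pbwMonomial k) ∧
      Submodule.span k (Set.range (pbwMonomial k)) = ⊤ := by
  exact ⟨PBW.lin_indep k, PBW.span_top k⟩
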